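/- For every n ≥ 1 there exist constants C₁, C₂ > 0 depending only on n such that for all weakly decreasing λ, x ∈ ℝⁿ one has C₁·S ≤ A(λ,x)·∏_{1≤i<j≤n}(1+(λ_i−λ_j)(x_i−x_j)) ≤ C₂·S, where S = V(λ)·(∏_{1≤i<j≤n} sinh(x_i−x_j))·e^{⟨λ,x⟩−ρ(x)}·∏_{1≤i<j≤n}(1+x_i−x_j) and ρ(x) = ∑_{1≤i<j≤n}(x_i−x_j). (Equivalently, the Harish-Chandra spherical function φ_λ(e^x) = c·A(λ,x)/(V(λ)·∏_{i<j} sinh(x_i−x_j)) of the complex symmetric space of type A_{n−1} satisfies φ_λ(e^x) ≍ e^{⟨λ,x⟩−ρ(x)}·∏_{i<j}(1+x_i−x_j)/(1+(λ_i−λ_j)(x_i−x_j)).) -/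

import Mathlib

open Finset

/-- The alternating sum `A(ξ,x) = ∑_{σ ∈ Sₙ} sgn(σ) · exp(∑_k ξ_{σ(k)} x_k)`. -/
noncomputable def altSum {n : ℕ} (ξ x : Fin n → ℝ) : ℝ :=
  ∑ σ : Equiv.Perm (Fin n), ((Equiv.Perm.sign σ : ℤ) : ℝ) * Real.exp (∑ k, ξ (σ k) * x k)

/-- The Vandermonde product `V(x) = ∏_{1 ≤ i < j ≤ n} (x_i − x_j)`. -/
def vand {n : ℕ} (x : Fin n → ℝ) : ℝ :=
  ∏ i : Fin n, ∏ j ∈ Finset.Ioi i, (x i - x j)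

/-- `ρ(x) = ∑_{1 ≤ i < j ≤ n} (x_i − x_j)`. -/
def rhoSum {n : ℕ} (x : Fin n → ℝ) : ℝ :=
  ∑ i : Fin n, ∑ j ∈ Finset.Ioi i, (x i - x j)

/-!
Subtracting consecutive rows of `(exp (ξ i * x j))` writes `altSum` in dimension `n + 1` as an
integral of `altSum` in dimension `n` over the box of vectors interlacing with `ξ`. By induction the
integrand may be replaced by `exp ⟨t, y⟩ * ∏_{i<j} u / (1 + u)` with `u = (t_i - t_j) (y_i - y_j)`.
The exponential concentrates the integral at the upper corner of the box, in each coordinate `j` on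
a scale comparable to the minimum of the side length and `1 / y_j`; the resulting product agrees
with the expected one up to factors that telescope. The stated form follows from
`u / (1 + u) * (1 + u) = u` and `t ≍ sinh t * exp (-t) * (1 + t)` on `[0, ∞)`.
-/

open MeasureTheory Filter Asymptotics

/-- The saturation `t / (1 + t)` of `t ≥ 0`, a rational substitute for `min 1 t`. The absolute
value makes the function continuous on the whole line. -/
noncomputable def saturation (t : ℝ) : ℝ := t / (1 + |t|)

theorem saturation_of_nonneg {t : ℝ} (ht : 0 ≤ t) : saturation t = t / (1 + t) := by
  rw [saturation, abs_of_nonneg ht]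

theorem saturation_nonneg {t : ℝ} (ht : 0 ≤ t) : 0 ≤ saturation t :=
  div_nonneg ht (by positivity)

theorem saturation_mul_one_add {t : ℝ} (ht : 0 ≤ t) : saturation t * (1 + t) = t := by
  rw [saturation_of_nonneg ht, div_mul_cancel₀ _ (by positivity)]

theorem saturation_le_one (t : ℝ) : saturation t ≤ 1 :=
  div_le_one_of_le₀ (by linarith [le_abs_self t]) (by positivity)

theorem saturation_le_saturation {s t : ℝ} (hs : 0 ≤ s) (hst : s ≤ t) :
    saturation s ≤ saturation t := by
  have ht := hs.trans hst
  rw [saturation_of_nonneg hs, saturation_of_nonneg ht, div_le_div_iff₀ (by positivity)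
    (by positivity)]
  linarith

theorem saturation_mul_le {K t : ℝ} (hK : 1 ≤ K) (ht : 0 ≤ t) :
    saturation (K * t) ≤ K * saturation t := by
  rw [saturation_of_nonneg ht, saturation_of_nonneg (by positivity), mul_div_assoc']
  gcongr
  exact le_mul_of_one_le_left ht hK

theorem continuous_saturation : Continuous saturation :=
  continuous_id.div (by fun_prop) fun t => by positivity

/-- The rational substitute `g / (1 + g * y)` for `min g y⁻¹`, up to a factor the length of the
part of `[0, g]` that carries the mass of `s ↦ exp (-(s * y))`. -/
noncomputable def effectiveGap (g y : ℝ) : ℝ := g / (1 + g * y)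

theorem effectiveGap_nonneg {g y : ℝ} (hg : 0 ≤ g) (hy : 0 ≤ y) : 0 ≤ effectiveGap g y :=
  div_nonneg hg (by positivity)

theorem effectiveGap_le {g y : ℝ} (hg : 0 ≤ g) (hy : 0 ≤ y) : effectiveGap g y ≤ g :=
  div_le_self hg (le_add_of_nonneg_right (mul_nonneg hg hy))

theorem effectiveGap_mul {g y : ℝ} (hg : 0 ≤ g) (hy : 0 ≤ y) :
    effectiveGap g y * y = saturation (g * y) := by
  rw [effectiveGap, saturation_of_nonneg (by positivity), div_mul_eq_mul_div]

theorem le_one_add_mul_effectiveGap {g s y : ℝ} (hg : 0 ≤ g) (hy : 0 ≤ y) (hsg : s ≤ g) :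
    s ≤ (1 + s * y) * effectiveGap g y := by
  rw [effectiveGap, mul_div_assoc', le_div_iff₀ (by positivity)]
  linarith

theorem saturation_add_effectiveGap_mul {a b p q : ℝ} (ha : 0 ≤ a) (hb : 0 ≤ b) (hp : 0 ≤ p)
    (hq : 0 ≤ q) : saturation ((a + effectiveGap b q) * p) =
      (a + b + a * b * q) * p / (1 + b * q + (a + b + a * b * q) * p) := by
  have := effectiveGap_nonneg hb hq
  rw [saturation_of_nonneg (by positivity), effectiveGap]
  field_simp
  ring

-- Over a common denominator the next two inequalities compare polynomials in `a`, `b`, `p`, `q`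
-- whose difference has nonnegative coefficients.
theorem saturation_mul_saturation_effectiveGap_le {a b p q : ℝ} (ha : 0 ≤ a) (hb : 0 ≤ b)
    (hp : 0 ≤ p) (hq : 0 ≤ q) :
    saturation (a * (p + q)) * saturation ((a + effectiveGap b q) * p) ≤
      2 * (saturation ((a + b) * (p + q)) * saturation (a * p)) := by
  rw [saturation_add_effectiveGap_mul ha hb hp hq, saturation_of_nonneg (by positivity),
    saturation_of_nonneg (by positivity), saturation_of_nonneg (by positivity), div_mul_div_comm,
    div_mul_div_comm, mul_div_assoc', div_le_div_iff₀ (by positivity) (by positivity),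
    ← sub_nonneg]
  ring_nf
  positivity

theorem saturation_mul_saturation_le_effectiveGap {a b p q : ℝ} (ha : 0 ≤ a) (hb : 0 ≤ b)
    (hp : 0 ≤ p) (hq : 0 ≤ q) :
    saturation ((a + b) * (p + q)) * saturation (a * p) ≤
      3 * (saturation (a * (p + q)) * saturation ((a + effectiveGap b q) * p)) := by
  rw [saturation_add_effectiveGap_mul ha hb hp hq, saturation_of_nonneg (by positivity),
    saturation_of_nonneg (by positivity), saturation_of_nonneg (by positivity), div_mul_div_comm,
    div_mul_div_comm, mul_div_assoc', div_le_div_iff₀ (by positivity) (by positivity),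
    ← sub_nonneg]
  ring_nf
  positivity

theorem saturation_le_one_sub_exp_neg {t : ℝ} (ht : 0 ≤ t) :
    saturation t ≤ 1 - Real.exp (-t) := by
  have hexp : Real.exp (-t) ≤ (1 + t)⁻¹ := by
    rw [Real.exp_neg, add_comm]
    exact inv_anti₀ (by positivity) (Real.add_one_le_exp t)
  calc saturation t = 1 - (1 + t)⁻¹ := by rw [saturation_of_nonneg ht]; field_simp; ring
    _ ≤ 1 - Real.exp (-t) := sub_le_sub_left hexp 1

theorem one_sub_exp_neg_le_saturation {t : ℝ} (ht : 0 ≤ t) :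
    1 - Real.exp (-t) ≤ 2 * saturation t := by
  rw [saturation_of_nonneg ht, mul_div_assoc', le_div_iff₀ (by positivity)]
  nlinarith [Real.add_one_le_exp (-t), Real.exp_pos (-t)]

theorem isTheta_comp_tendsto {α β E F : Type*} [Norm E] [Norm F] {l : Filter α} {l' : Filter β}
    {f : α → E} {g : α → F} {k : β → α} (h : f =Θ[l] g) (hk : Tendsto k l' l) :
    (fun z => f (k z)) =Θ[l'] fun z => g (k z) :=
  ⟨h.1.comp_tendsto hk, h.2.comp_tendsto hk⟩

theorem isTheta_principal_iff_of_nonneg {α : Type*} {s : Set α} {f g : α → ℝ}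
    (hf : ∀ z ∈ s, 0 ≤ f z) (hg : ∀ z ∈ s, 0 ≤ g z) :
    f =Θ[𝓟 s] g ↔ ∃ C₁ C₂ : ℝ, 0 < C₁ ∧ 0 < C₂ ∧
      ∀ z ∈ s, C₁ * g z ≤ f z ∧ f z ≤ C₂ * g z := by
  constructor
  · rintro ⟨hfg, hgf⟩
    obtain ⟨C, hC, hfC⟩ := hfg.exists_pos
    obtain ⟨c, hc, hgc⟩ := hgf.exists_pos
    rw [isBigOWith_principal] at hfC hgc
    refine ⟨c⁻¹, C, inv_pos.2 hc, hC, fun z hz => ⟨?_, ?_⟩⟩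
    · simpa [inv_mul_le_iff₀ hc, abs_of_nonneg (hf z hz), abs_of_nonneg (hg z hz)] using hgc z hz
    · simpa [abs_of_nonneg (hf z hz), abs_of_nonneg (hg z hz)] using hfC z hz
  · rintro ⟨C₁, C₂, hC₁, -, h⟩
    refine ⟨isBigO_principal.2 ⟨C₂, fun z hz => ?_⟩, isBigO_principal.2 ⟨C₁⁻¹, fun z hz => ?_⟩⟩
    · simpa [abs_of_nonneg (hf z hz), abs_of_nonneg (hg z hz)] using (h z hz).2
    · simpa [le_inv_mul_iff₀ hC₁, abs_of_nonneg (hf z hz), abs_of_nonneg (hg z hz)]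
        using (h z hz).1

theorem saturation_mul_saturation_effectiveGap_isTheta :
    (fun v : ℝ × ℝ × ℝ × ℝ => saturation (v.1 * (v.2.2.1 + v.2.2.2)) *
      saturation ((v.1 + effectiveGap v.2.1 v.2.2.2) * v.2.2.1)) =Θ[𝓟 (Set.Ici 0)]
    fun v => saturation ((v.1 + v.2.1) * (v.2.2.1 + v.2.2.2)) * saturation (v.1 * v.2.2.1) := by
  refine (isTheta_principal_iff_of_nonneg ?_ ?_).2 ⟨1 / 3, 2, by norm_num, by norm_num, ?_⟩
  all_goals rintro ⟨a, b, p, q⟩ ⟨ha : 0 ≤ a, hb : 0 ≤ b, hp : 0 ≤ p, hq : 0 ≤ q⟩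
  · have := effectiveGap_nonneg hb hq
    exact mul_nonneg (saturation_nonneg (by positivity)) (saturation_nonneg (by positivity))
  · exact mul_nonneg (saturation_nonneg (by positivity)) (saturation_nonneg (by positivity))
  · have hlower := saturation_mul_saturation_le_effectiveGap ha hb hp hq
    exact ⟨by linarith, saturation_mul_saturation_effectiveGap_le ha hb hp hq⟩

theorem isTheta_sinh_mul_exp_neg_mul :
    (fun t : ℝ => t) =Θ[𝓟 (Set.Ici 0)] fun t => Real.sinh t * Real.exp (-t) * (1 + t) := by
  have hsinh : ∀ t : ℝ, Real.sinh t * Real.exp (-t) = (1 - Real.exp (-(2 * t))) / 2 := fun t => by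
    rw [Real.sinh_eq, div_mul_eq_mul_div, sub_mul, ← Real.exp_add, ← Real.exp_add, add_neg_cancel,
      Real.exp_zero, two_mul, neg_add]
  have hnonneg : ∀ t ∈ Set.Ici (0 : ℝ), 0 ≤ Real.sinh t * Real.exp (-t) * (1 + t) :=
    fun t (ht : 0 ≤ t) => by
      have := Real.sinh_nonneg_iff.2 ht
      positivity
  refine (isTheta_principal_iff_of_nonneg (fun _ ht => ht) hnonneg).2
    ⟨1 / 2, 2, by norm_num, by norm_num, fun t (ht : 0 ≤ t) => ?_⟩
  have h1t : 0 ≤ 1 + t := by positivity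
  rw [hsinh]
  constructor
  · have hup := (one_sub_exp_neg_le_saturation (t := 2 * t) (by positivity)).trans
      (mul_le_mul_of_nonneg_left (saturation_mul_le one_le_two ht) two_pos.le)
    linarith [mul_le_mul_of_nonneg_right hup h1t, saturation_mul_one_add ht]
  · have hlo := (saturation_le_saturation ht (by linarith)).trans
      (saturation_le_one_sub_exp_neg (t := 2 * t) (by positivity))
    linarith [mul_le_mul_of_nonneg_right hlo h1t, saturation_mul_one_add ht]

/-- The product of `f i j` over all pairs `i < j`, as it appears in `vand`. -/
def pairProd {M : Type*} [CommMonoid M] {n : ℕ} (f : Fin n → Fin n → M) : M :=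
  ∏ i : Fin n, ∏ j ∈ Finset.Ioi i, f i j

section PairProd

variable {M : Type*} [CommMonoid M] {n : ℕ}

theorem pairProd_eq_prod_prod_ite (f : Fin n → Fin n → M) :
    pairProd f = ∏ i, ∏ j, if i < j then f i j else 1 := by
  simp only [pairProd, ← Finset.prod_filter, Finset.filter_lt_eq_Ioi]

theorem pairProd_castSucc (f : Fin (n + 1) → Fin (n + 1) → M) :
    pairProd f = pairProd (fun i j : Fin n => f i.castSucc j.castSucc) *
      ∏ i : Fin n, f i.castSucc (Fin.last n) := by
  simp only [pairProd_eq_prod_prod_ite, Fin.prod_univ_castSucc, Finset.prod_mul_distrib]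
  simp [Fin.castSucc_lt_last, (Fin.castSucc_lt_last _).not_gt]

theorem pairProd_mul_distrib (f g : Fin n → Fin n → M) :
    pairProd (fun i j => f i j * g i j) = pairProd f * pairProd g := by
  simp only [pairProd, Finset.prod_mul_distrib]

theorem pairProd_snd (s : Fin n → M) : pairProd (fun _ j => s j) = ∏ j, s j ^ (j : ℕ) := by
  rw [pairProd_eq_prod_prod_ite, Finset.prod_comm]
  simp only [← Finset.prod_filter, Finset.filter_gt_eq_Iio, Finset.prod_const, Fin.card_Iio]

theorem pairProd_congr {f g : Fin n → Fin n → M} (h : ∀ i j, i < j → f i j = g i j) :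
    pairProd f = pairProd g :=
  Finset.prod_congr rfl fun i _ => Finset.prod_congr rfl fun j hj => h i j (Finset.mem_Ioi.1 hj)

end PairProd

section PairProdReal

variable {n : ℕ} {f g : Fin n → Fin n → ℝ}

theorem pairProd_nonneg (h : ∀ i j, i < j → 0 ≤ f i j) : 0 ≤ pairProd f :=
  Finset.prod_nonneg fun i _ => Finset.prod_nonneg fun j hj => h i j (Finset.mem_Ioi.1 hj)

theorem pairProd_le_pairProd (hf : ∀ i j, i < j → 0 ≤ f i j)
    (h : ∀ i j, i < j → f i j ≤ g i j) : pairProd f ≤ pairProd g :=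
  Finset.prod_le_prod
    (fun i _ => Finset.prod_nonneg fun j hj => hf i j (Finset.mem_Ioi.1 hj))
    fun i _ => Finset.prod_le_prod (fun j hj => hf i j (Finset.mem_Ioi.1 hj))
      fun j hj => h i j (Finset.mem_Ioi.1 hj)

theorem continuous_pairProd {X : Type*} [TopologicalSpace X] {F : X → Fin n → Fin n → ℝ}
    (h : ∀ i j, Continuous fun z => F z i j) : Continuous fun z => pairProd (F z) :=
  continuous_finsetProd _ fun i _ => continuous_finsetProd _ fun j _ => h i j

variable {α : Type*} {l : Filter α}

theorem isTheta_pairProd {F G : Fin n → Fin n → α → ℝ}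
    (h : ∀ i j, i < j → F i j =Θ[l] G i j) :
    (fun z => pairProd fun i j => F i j z) =Θ[l] fun z => pairProd fun i j => G i j z :=
  .finsetProd fun i _ => .finsetProd fun j hj => h i j (Finset.mem_Ioi.1 hj)

/-- Telescoping in `j` for each fixed `i`. -/
theorem isTheta_prod_mul_pairProd_of_step {U : Fin n → Fin (n + 1) → α → ℝ}
    {F G : Fin n → Fin n → α → ℝ} (h : ∀ i j, i < j →
      (fun z => U i j.castSucc z * F i j z) =Θ[l] fun z => U i j.succ z * G i j z) :
    (fun z => (∏ j, U j j.succ z) * pairProd fun i j => F i j z) =Θ[l]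
      fun z => (∏ j, U j (Fin.last n) z) * pairProd fun i j => G i j z := by
  induction n with
  | zero => simpa [pairProd] using isTheta_rfl
  | succ n ih =>
    have hinit := ih (U := fun i k => U i.castSucc k.castSucc)
      (F := fun i j => F i.castSucc j.castSucc) (G := fun i j => G i.castSucc j.castSucc)
      fun i j hij => h _ _ (Fin.castSucc_lt_castSucc_iff.2 hij)
    have hlast := IsTheta.finsetProd (s := Finset.univ) fun (i : Fin n) _ =>
      h i.castSucc (Fin.last n) (Fin.castSucc_lt_last i)
    simp only [Finset.prod_mul_distrib] at hlast
    simp only [pairProd_castSucc, Fin.prod_univ_castSucc, Fin.succ_castSucc, Fin.succ_last]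
      at hlast ⊢
    calc _ =Θ[l] fun z => U (Fin.last n) (Fin.last (n + 1)) z *
          (∏ i : Fin n, F i.castSucc (Fin.last n) z) *
          ((∏ i : Fin n, U i.castSucc i.succ.castSucc z) *
            pairProd fun i j : Fin n => F i.castSucc j.castSucc z) :=
        EventuallyEq.isTheta (.of_eq (funext fun z => by ring))
      _ =Θ[l] fun z => U (Fin.last n) (Fin.last (n + 1)) z *
          (∏ i : Fin n, F i.castSucc (Fin.last n) z) *
          ((∏ i : Fin n, U i.castSucc (Fin.last n).castSucc z) *
            pairProd fun i j : Fin n => G i.castSucc j.castSucc z) := isTheta_rfl.mul hinit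
      _ =Θ[l] fun z => U (Fin.last n) (Fin.last (n + 1)) z *
          (pairProd fun i j : Fin n => G i.castSucc j.castSucc z) *
          ((∏ i : Fin n, U i.castSucc (Fin.last n).castSucc z) *
            ∏ i : Fin n, F i.castSucc (Fin.last n) z) :=
        EventuallyEq.isTheta (.of_eq (funext fun z => by ring))
      _ =Θ[l] fun z => U (Fin.last n) (Fin.last (n + 1)) z *
          (pairProd fun i j : Fin n => G i.castSucc j.castSucc z) *
          ((∏ i : Fin n, U i.castSucc (Fin.last (n + 1)) z) *
            ∏ i : Fin n, G i.castSucc (Fin.last n) z) := isTheta_rfl.mul hlast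
      _ =Θ[l] _ := EventuallyEq.isTheta (.of_eq (funext fun z => by ring))

end PairProdReal

theorem isBigO_setIntegral {α β E : Type*} [MeasurableSpace β] [NormedAddCommGroup E]
    [NormedSpace ℝ E] {μ : Measure β} {s : Set α} {B : α → Set β} {f : α → β → E}
    {g : α → β → ℝ} (hB : ∀ z ∈ s, MeasurableSet (B z))
    (hg : ∀ z ∈ s, IntegrableOn (g z) (B z) μ) (hg0 : ∀ z ∈ s, ∀ t ∈ B z, 0 ≤ g z t)
    (h : (fun p : α × β => f p.1 p.2) =O[𝓟 {p | p.1 ∈ s ∧ p.2 ∈ B p.1}] fun p => g p.1 p.2) :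
    (fun z => ∫ t in B z, f z t ∂μ) =O[𝓟 s] fun z => ∫ t in B z, g z t ∂μ := by
  obtain ⟨C, hC⟩ := isBigO_principal.1 h
  refine isBigO_principal.2 ⟨C, fun z hz => ?_⟩
  rw [Real.norm_of_nonneg (setIntegral_nonneg (hB z hz) (hg0 z hz)), ← integral_const_mul]
  refine norm_integral_le_of_norm_le ((hg z hz).const_mul C)
    ((ae_restrict_iff' (hB z hz)).2 (.of_forall fun t ht => ?_))
  rw [← Real.norm_of_nonneg (hg0 z hz t ht)]
  exact hC (z, t) ⟨hz, ht⟩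

theorem setIntegral_Icc_mul_exp {a b y : ℝ} (hab : a ≤ b) :
    ∫ t in Set.Icc a b, y * Real.exp (t * y) = Real.exp (b * y) - Real.exp (a * y) := by
  rw [integral_Icc_eq_integral_Ioc, ← intervalIntegral.integral_of_le hab]
  refine intervalIntegral.integral_eq_sub_of_hasDerivAt (f := fun t => Real.exp (t * y)) ?_ ?_
  · intro t _
    simpa [mul_comm] using ((hasDerivAt_id t).mul_const y).exp
  · exact (by fun_prop : Continuous fun t => y * Real.exp (t * y)).intervalIntegrable _ _

theorem setIntegral_Icc_prod {ι 𝕜 : Type*} [Fintype ι] [RCLike 𝕜] (a b : ι → ℝ)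
    (f : ι → ℝ → 𝕜) :
    ∫ t in Set.Icc a b, ∏ i, f i (t i) = ∏ i, ∫ u in Set.Icc (a i) (b i), f i u := by
  rw [← Set.pi_univ_Icc, volume_pi, Measure.restrict_pi_pi, integral_fintype_prod_eq_prod]

theorem one_add_pow_le_mul_exp_half (k : ℕ) {s : ℝ} (hs : 0 ≤ s) :
    (1 + s) ^ k ≤ 2 ^ k * k.factorial * Real.exp (1 / 2) * Real.exp (s / 2) := by
  have hpow := Real.pow_div_factorial_le_exp ((1 + s) / 2) (by positivity) k
  rw [div_le_iff₀ (by positivity), div_pow, div_le_iff₀ (by positivity), add_div,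
    Real.exp_add] at hpow
  linarith

theorem setIntegral_Icc_pow_mul_exp_le (k : ℕ) {a b y : ℝ} (hab : a ≤ b) (hy : 0 ≤ y) :
    ∫ t in Set.Icc a b, y * ((1 + (b - t) * y) ^ k * Real.exp (t * y)) ≤
      4 * (2 ^ k * k.factorial * Real.exp (1 / 2)) *
        (Real.exp (b * y) * saturation ((b - a) * y)) := by
  set M : ℝ := 2 ^ k * k.factorial * Real.exp (1 / 2)
  have hgap : 0 ≤ (b - a) * y := mul_nonneg (sub_nonneg.2 hab) hy
  have hexp : Real.exp (b * y / 2) * (Real.exp (b * (y / 2)) - Real.exp (a * (y / 2))) =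
      Real.exp (b * y) * (1 - Real.exp (-((b - a) * y / 2))) := by
    rw [mul_sub, mul_sub, ← Real.exp_add, ← Real.exp_add, ← Real.exp_add]
    ring_nf
  have hsat : 1 - Real.exp (-((b - a) * y / 2)) ≤ 2 * saturation ((b - a) * y) :=
    (one_sub_exp_neg_le_saturation (by positivity)).trans
      (mul_le_mul_of_nonneg_left (saturation_le_saturation (by positivity) (by linarith))
        two_pos.le)
  calc ∫ t in Set.Icc a b, y * ((1 + (b - t) * y) ^ k * Real.exp (t * y))
      ≤ ∫ t in Set.Icc a b, 2 * M * Real.exp (b * y / 2) *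
          (y / 2 * Real.exp (t * (y / 2))) := by
        refine setIntegral_mono_on (Continuous.integrableOn_Icc (by fun_prop))
          (Continuous.integrableOn_Icc (by fun_prop)) measurableSet_Icc fun t ht => ?_
        have hpow := one_add_pow_le_mul_exp_half k (mul_nonneg (sub_nonneg.2 ht.2) hy)
        calc y * ((1 + (b - t) * y) ^ k * Real.exp (t * y))
            ≤ y * (M * Real.exp ((b - t) * y / 2) * Real.exp (t * y)) := by gcongr
          _ = y * (M * (Real.exp (b * y / 2) * Real.exp (t * (y / 2)))) := by
              rw [mul_assoc, ← Real.exp_add, ← Real.exp_add]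
              ring_nf
          _ = _ := by ring
    _ = 2 * M * (Real.exp (b * y) * (1 - Real.exp (-((b - a) * y / 2)))) := by
        rw [integral_const_mul, setIntegral_Icc_mul_exp hab, mul_assoc, hexp]
    _ ≤ 2 * M * (Real.exp (b * y) * (2 * saturation ((b - a) * y))) := by gcongr
    _ = _ := by ring

theorem det_eq_det_sub_of_last_column_eq_one {R : Type*} [CommRing R] {n : ℕ}
    (A : Matrix (Fin (n + 1)) (Fin (n + 1)) R) (hA : ∀ i, A i (Fin.last n) = 1) :
    A.det =
      (Matrix.of fun i j : Fin n => A i.castSucc j.castSucc - A i.succ j.castSucc).det := by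
  have hneg : (Matrix.of fun i j : Fin n => A i.castSucc j.castSucc - A i.succ j.castSucc) =
      -(Matrix.of fun i j : Fin n => A i.succ j.castSucc - A i.castSucc j.castSucc) := by
    ext i j
    simp
  rw [Matrix.det_eq_of_forall_row_eq_smul_add_pred (A := A)
    (B := Matrix.of (Fin.cons (A 0) fun i j => A i.succ j - A i.castSucc j)) (fun _ => 1)
    (fun j => by simp) (fun i j => by simp), Matrix.det_succ_column _ (Fin.last n),
    Fin.sum_univ_succ, hneg, Matrix.det_neg]
  simp [hA, Matrix.submatrix, Fin.succAbove_last]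

theorem altSum_eq_det {n : ℕ} (ξ x : Fin n → ℝ) :
    altSum ξ x = (Matrix.of fun i j => Real.exp (ξ i * x j)).det := by
  simp [altSum, Matrix.det_apply', Real.exp_sum]

theorem continuous_altSum_left {n : ℕ} (x : Fin n → ℝ) : Continuous fun ξ => altSum ξ x := by
  unfold altSum
  fun_prop

/-- The translate of `x` whose last coordinate vanishes, without that coordinate. -/
def subLast {n : ℕ} (x : Fin (n + 1) → ℝ) : Fin n → ℝ :=
  fun j => x j.castSucc - x (Fin.last n)

theorem subLast_antitone {n : ℕ} {x : Fin (n + 1) → ℝ} (hx : Antitone x) :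
    Antitone (subLast x) := fun _ _ hij =>
  sub_le_sub_right (hx (Fin.castSucc_le_castSucc_iff.2 hij)) _

theorem subLast_nonneg {n : ℕ} {x : Fin (n + 1) → ℝ} (hx : Antitone x) (j : Fin n) :
    0 ≤ subLast x j :=
  sub_nonneg.2 (hx (Fin.le_last _))

theorem sum_mul_eq_sum_mul_last_add {n : ℕ} (ξ x : Fin (n + 1) → ℝ) :
    ∑ i, ξ i * x i = ∑ i, ξ i * x (Fin.last n) + ∑ i, Fin.init ξ i * subLast x i := by
  simp only [Fin.sum_univ_castSucc, Fin.init, subLast, mul_sub, Finset.sum_sub_distrib]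
  ring

theorem altSum_eq_exp_mul_det {n : ℕ} (ξ x : Fin (n + 1) → ℝ) :
    altSum ξ x = Real.exp (∑ i, ξ i * x (Fin.last n)) *
      (Matrix.of fun i j : Fin n => Real.exp (Fin.init ξ i * subLast x j) -
        Real.exp (Fin.tail ξ i * subLast x j)).det := by
  have hscale : altSum ξ x = Real.exp (∑ i, ξ i * x (Fin.last n)) *
      (Matrix.of fun i j => Real.exp (ξ i * (x j - x (Fin.last n)))).det := by
    rw [altSum_eq_det, Real.exp_sum, ← Matrix.det_mul_column]
    congr 1
    ext i j
    simp only [Matrix.of_apply]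
    rw [← Real.exp_add, ← mul_add, add_sub_cancel]
  rw [hscale, det_eq_det_sub_of_last_column_eq_one _ (by simp)]
  rfl

theorem setIntegral_Icc_prod_mul_altSum {n : ℕ} {a b : Fin n → ℝ} (hab : a ≤ b) (y : Fin n → ℝ) :
    ∫ t in Set.Icc a b, (∏ j, y j) * altSum t y =
      (Matrix.of fun i j => Real.exp (b i * y j) - Real.exp (a i * y j)).det := by
  have hexpand : ∀ t : Fin n → ℝ, (∏ j, y j) * altSum t y =
      ∑ σ : Equiv.Perm (Fin n), ((Equiv.Perm.sign σ : ℤ) : ℝ) *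
        ∏ i, (y (σ i) * Real.exp (t i * y (σ i))) := fun t => by
    rw [altSum_eq_det, ← Matrix.det_transpose, Matrix.det_apply', Finset.mul_sum]
    refine Finset.sum_congr rfl fun σ _ => ?_
    rw [Finset.prod_mul_distrib, Equiv.prod_comp σ y, mul_left_comm]
    rfl
  simp_rw [hexpand]
  rw [integral_finsetSum _ fun σ _ => Continuous.integrableOn_Icc (by fun_prop),
    ← Matrix.det_transpose, Matrix.det_apply']
  refine Finset.sum_congr rfl fun σ _ => ?_
  rw [integral_const_mul, setIntegral_Icc_prod a b fun i u => y (σ i) * Real.exp (u * y (σ i))]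
  simp only [setIntegral_Icc_mul_exp (hab _), Matrix.transpose_apply, Matrix.of_apply]

theorem tail_le_init {n : ℕ} {ξ : Fin (n + 1) → ℝ} (hξ : Antitone ξ) :
    Fin.tail ξ ≤ Fin.init ξ := fun i => hξ (Fin.castSucc_le_succ i)

theorem init_le_tail {n : ℕ} {ξ : Fin (n + 1) → ℝ} (hξ : Antitone ξ) {i j : Fin n} (hij : i < j) :
    Fin.init ξ j ≤ Fin.tail ξ i :=
  hξ (Fin.succ_le_castSucc_iff.2 hij)

/-- The vectors of `Set.Icc (Fin.tail ξ) (Fin.init ξ)` are those that interlace with `ξ`. -/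
theorem altSum_eq_exp_mul_setIntegral {n : ℕ} {ξ : Fin (n + 1) → ℝ} (hξ : Antitone ξ)
    (x : Fin (n + 1) → ℝ) :
    altSum ξ x = Real.exp (∑ i, ξ i * x (Fin.last n)) *
      ∫ t in Set.Icc (Fin.tail ξ) (Fin.init ξ), (∏ j, subLast x j) * altSum t (subLast x) := by
  rw [altSum_eq_exp_mul_det, setIntegral_Icc_prod_mul_altSum (tail_le_init hξ)]

theorem antitone_of_mem_Icc {ι R : Type*} [PartialOrder ι] [Preorder R] {a b t : ι → R}
    (hsep : ∀ i j, i < j → b j ≤ a i) (ht : t ∈ Set.Icc a b) : Antitone t :=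
  antitone_iff_forall_lt.2 fun i j hij => ((ht.2 j).trans (hsep i j hij)).trans (ht.1 i)

theorem altSum_nonneg {n : ℕ} {ξ x : Fin n → ℝ} (hξ : Antitone ξ) (hx : Antitone x) :
    0 ≤ altSum ξ x := by
  induction n with
  | zero => simp [altSum]
  | succ n ih =>
    rw [altSum_eq_exp_mul_setIntegral hξ]
    refine mul_nonneg (Real.exp_pos _).le (setIntegral_nonneg measurableSet_Icc fun t ht => ?_)
    exact mul_nonneg (Finset.prod_nonneg fun j _ => subLast_nonneg hx j)
      (ih (antitone_of_mem_Icc (fun _ _ => init_le_tail hξ) ht) (subLast_antitone hx))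

/-- The order of magnitude of `altSum ξ x` for weakly decreasing `ξ` and `x`. Writing `u / (1 + u)`
as a saturation keeps Vandermonde denominators out of the induction on the dimension. -/
noncomputable def altModel {n : ℕ} (ξ x : Fin n → ℝ) : ℝ :=
  Real.exp (∑ k, ξ k * x k) * pairProd fun i j => saturation ((ξ i - ξ j) * (x i - x j))

/-- The order of magnitude of the integral of `t ↦ (∏ j, y j) * altModel t y` over the box
`Set.Icc a b`. Its mass sits near the corner `b`, at distance about `effectiveGap (b j - a j) (y j)`
in the `j`-th coordinate. -/
noncomputable def interlacingModel {n : ℕ} (a b y : Fin n → ℝ) : ℝ :=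
  Real.exp (∑ k, b k * y k) * ((∏ j, saturation ((b j - a j) * y j)) *
    pairProd fun i j => saturation ((b i - b j + effectiveGap (b j - a j) (y j)) * (y i - y j)))

theorem saturation_sub_mul_sub_nonneg {n : ℕ} {ξ x : Fin n → ℝ} (hξ : Antitone ξ)
    (hx : Antitone x) {i j : Fin n} (hij : i < j) :
    0 ≤ saturation ((ξ i - ξ j) * (x i - x j)) :=
  saturation_nonneg (mul_nonneg (sub_nonneg.2 (hξ hij.le)) (sub_nonneg.2 (hx hij.le)))

theorem altModel_nonneg {n : ℕ} {ξ x : Fin n → ℝ} (hξ : Antitone ξ) (hx : Antitone x) :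
    0 ≤ altModel ξ x :=
  mul_nonneg (Real.exp_pos _).le
    (pairProd_nonneg fun _ _ hij => saturation_sub_mul_sub_nonneg hξ hx hij)

theorem continuous_altModel_left {n : ℕ} (x : Fin n → ℝ) : Continuous fun ξ => altModel ξ x :=
  (by fun_prop : Continuous fun ξ : Fin n → ℝ => Real.exp (∑ k, ξ k * x k)).mul
    (continuous_pairProd fun _ _ => continuous_saturation.comp (by fun_prop))

theorem Icc_sub_smul_subset_Icc {ι : Type*} {a b v : ι → ℝ} {r s : ℝ} (hv : 0 ≤ v)
    (hva : v ≤ b - a) (hr : r ≤ 1) (hs : 0 ≤ s) : Set.Icc (b - r • v) (b - s • v) ⊆ Set.Icc a b :=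
  Set.Icc_subset_Icc
    (le_sub_comm.1 ((smul_le_of_le_one_left hv hr).trans hva))
    (sub_le_self b (smul_nonneg hs hv))

theorem volume_real_Icc_sub_smul {ι : Type*} [Fintype ι] {b v : ι → ℝ} {r s : ℝ} (hv : 0 ≤ v)
    (hsr : s ≤ r) : volume.real (Set.Icc (b - r • v) (b - s • v)) = ∏ i, (r - s) * v i := by
  rw [measureReal_def, Real.volume_Icc_pi_toReal
    (sub_le_sub_left (smul_le_smul_of_nonneg_right hsr hv) b)]
  refine Finset.prod_congr rfl fun i _ => ?_
  rw [sub_mul]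
  exact sub_sub_sub_cancel_left _ _ _

section Interlacing

variable {n : ℕ} {a b y t : Fin n → ℝ}

theorem sub_add_effectiveGap_mul_nonneg (hab : a ≤ b) (hsep : ∀ i j, i < j → b j ≤ a i)
    (hy : Antitone y) (hy0 : 0 ≤ y) {i j : Fin n} (hij : i < j) :
    0 ≤ (b i - b j + effectiveGap (b j - a j) (y j)) * (y i - y j) :=
  mul_nonneg (add_nonneg (sub_nonneg.2 ((hsep i j hij).trans (hab i)))
    (effectiveGap_nonneg (sub_nonneg.2 (hab j)) (hy0 j))) (sub_nonneg.2 (hy hij.le))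

theorem interlacingModel_nonneg (hab : a ≤ b) (hsep : ∀ i j, i < j → b j ≤ a i)
    (hy : Antitone y) (hy0 : 0 ≤ y) : 0 ≤ interlacingModel a b y :=
  mul_nonneg (Real.exp_pos _).le (mul_nonneg
    (Finset.prod_nonneg fun j _ => saturation_nonneg (mul_nonneg (sub_nonneg.2 (hab j)) (hy0 j)))
    (pairProd_nonneg fun _ _ hij =>
      saturation_nonneg (sub_add_effectiveGap_mul_nonneg hab hsep hy hy0 hij)))

theorem saturation_sub_mul_sub_le_of_mem_Icc (hab : a ≤ b) (hsep : ∀ i j, i < j → b j ≤ a i)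
    (hy : Antitone y) (hy0 : 0 ≤ y) (ht : t ∈ Set.Icc a b) {i j : Fin n} (hij : i < j) :
    saturation ((t i - t j) * (y i - y j)) ≤ (1 + (b j - t j) * y j) *
      saturation ((b i - b j + effectiveGap (b j - a j) (y j)) * (y i - y j)) := by
  have hyij : 0 ≤ y i - y j := sub_nonneg.2 (hy hij.le)
  have htij : 0 ≤ t i - t j := sub_nonneg.2 (antitone_of_mem_Icc hsep ht hij.le)
  have hbij : 0 ≤ b i - b j := sub_nonneg.2 ((hsep i j hij).trans (hab i))
  have hs : 0 ≤ (b j - t j) * y j := mul_nonneg (sub_nonneg.2 (ht.2 j)) (hy0 j)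
  have hgap : b j - t j ≤ (1 + (b j - t j) * y j) * effectiveGap (b j - a j) (y j) :=
    le_one_add_mul_effectiveGap (sub_nonneg.2 (hab j)) (hy0 j) (sub_le_sub_left (ht.1 j) _)
  have hdiff : t i - t j ≤
      (1 + (b j - t j) * y j) * (b i - b j + effectiveGap (b j - a j) (y j)) := by
    linarith [ht.2 i, mul_nonneg hs hbij]
  calc saturation ((t i - t j) * (y i - y j))
      ≤ saturation ((1 + (b j - t j) * y j) *
          ((b i - b j + effectiveGap (b j - a j) (y j)) * (y i - y j))) := by
        rw [← mul_assoc]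
        exact saturation_le_saturation (mul_nonneg htij hyij)
          (mul_le_mul_of_nonneg_right hdiff hyij)
    _ ≤ _ := saturation_mul_le (le_add_of_nonneg_right hs)
        (sub_add_effectiveGap_mul_nonneg hab hsep hy hy0 hij)

theorem altModel_le_of_mem_Icc (hab : a ≤ b) (hsep : ∀ i j, i < j → b j ≤ a i)
    (hy : Antitone y) (hy0 : 0 ≤ y) (ht : t ∈ Set.Icc a b) :
    altModel t y ≤
      (pairProd fun i j =>
          saturation ((b i - b j + effectiveGap (b j - a j) (y j)) * (y i - y j))) *
        ∏ j, ((1 + (b j - t j) * y j) ^ (j : ℕ) * Real.exp (t j * y j)) :=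
  calc altModel t y
      ≤ Real.exp (∑ k, t k * y k) * pairProd fun i j => (1 + (b j - t j) * y j) *
          saturation ((b i - b j + effectiveGap (b j - a j) (y j)) * (y i - y j)) :=
        mul_le_mul_of_nonneg_left (pairProd_le_pairProd
          (fun _ _ hij => saturation_sub_mul_sub_nonneg (antitone_of_mem_Icc hsep ht) hy hij)
          fun _ _ hij => saturation_sub_mul_sub_le_of_mem_Icc hab hsep hy hy0 ht hij)
          (Real.exp_pos _).le
    _ = _ := by
        rw [pairProd_mul_distrib, pairProd_snd, Finset.prod_mul_distrib, Real.exp_sum]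
        ring

theorem setIntegral_Icc_altModel_le (hab : a ≤ b) (hsep : ∀ i j, i < j → b j ≤ a i)
    (hy : Antitone y) (hy0 : 0 ≤ y) :
    ∫ t in Set.Icc a b, (∏ j, y j) * altModel t y ≤
      (∏ j : Fin n, 4 * (2 ^ (j : ℕ) * (j : ℕ).factorial * Real.exp (1 / 2))) *
        interlacingModel a b y := by
  set Q := pairProd fun i j =>
    saturation ((b i - b j + effectiveGap (b j - a j) (y j)) * (y i - y j))
  have hQ : 0 ≤ Q := pairProd_nonneg fun _ _ hij =>
    saturation_nonneg (sub_add_effectiveGap_mul_nonneg hab hsep hy hy0 hij)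
  have hprod : 0 ≤ ∏ j, y j := Finset.prod_nonneg fun j _ => hy0 j
  calc ∫ t in Set.Icc a b, (∏ j, y j) * altModel t y
      ≤ ∫ t in Set.Icc a b, Q *
          ∏ j, (y j * ((1 + (b j - t j) * y j) ^ (j : ℕ) * Real.exp (t j * y j))) := by
        refine setIntegral_mono_on ((continuous_altModel_left y).const_mul _).integrableOn_Icc
          (Continuous.integrableOn_Icc (by fun_prop)) measurableSet_Icc fun t ht => ?_
        rw [Finset.prod_mul_distrib, mul_left_comm]
        exact mul_le_mul_of_nonneg_left (altModel_le_of_mem_Icc hab hsep hy hy0 ht) hprod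
    _ = Q * ∏ j, ∫ u in Set.Icc (a j) (b j),
          y j * ((1 + (b j - u) * y j) ^ (j : ℕ) * Real.exp (u * y j)) := by
        rw [integral_const_mul, setIntegral_Icc_prod a b fun j u =>
          y j * ((1 + (b j - u) * y j) ^ (j : ℕ) * Real.exp (u * y j))]
    _ ≤ Q * ∏ j : Fin n, 4 * (2 ^ (j : ℕ) * (j : ℕ).factorial * Real.exp (1 / 2)) *
          (Real.exp (b j * y j) * saturation ((b j - a j) * y j)) := by
        refine mul_le_mul_of_nonneg_left (Finset.prod_le_prod (fun j _ => ?_) fun j _ =>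
          setIntegral_Icc_pow_mul_exp_le j (hab j) (hy0 j)) hQ
        refine setIntegral_nonneg measurableSet_Icc fun u hu => ?_
        have hs : 0 ≤ (b j - u) * y j := mul_nonneg (sub_nonneg.2 hu.2) (hy0 j)
        have hyj : 0 ≤ y j := hy0 j
        positivity
    _ = _ := by
        simp only [Q, interlacingModel, Real.exp_sum, Finset.prod_mul_distrib]
        ring

theorem le_altModel_of_mem_Icc (hab : a ≤ b) (hsep : ∀ i j, i < j → b j ≤ a i)
    (hy : Antitone y) (hy0 : 0 ≤ y)
    (ht : t ∈ Set.Icc (b - (1 / 2 : ℝ) • fun j => effectiveGap (b j - a j) (y j))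
      (b - (1 / 4 : ℝ) • fun j => effectiveGap (b j - a j) (y j))) :
    (∏ _j : Fin n, Real.exp (-(1 / 2))) * (pairProd fun _ _ : Fin n => (1 / 4 : ℝ)) *
      (Real.exp (∑ k, b k * y k) * pairProd fun i j =>
        saturation ((b i - b j + effectiveGap (b j - a j) (y j)) * (y i - y j))) ≤
      altModel t y := by
  have hlower : ∀ j, b j - 1 / 2 * effectiveGap (b j - a j) (y j) ≤ t j := ht.1
  have hupper : ∀ j, t j ≤ b j - 1 / 4 * effectiveGap (b j - a j) (y j) := ht.2
  have hgap : ∀ j, 0 ≤ b j - a j := fun j => sub_nonneg.2 (hab j)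
  have hexp : (∏ _j : Fin n, Real.exp (-(1 / 2))) * Real.exp (∑ k, b k * y k) ≤
      Real.exp (∑ k, t k * y k) := by
    simp only [Real.exp_sum, ← Finset.prod_mul_distrib, ← Real.exp_add]
    refine Finset.prod_le_prod (fun _ _ => (Real.exp_pos _).le) fun j _ => Real.exp_le_exp.2 ?_
    have hle : effectiveGap (b j - a j) (y j) * y j ≤ 1 :=
      (effectiveGap_mul (hgap j) (hy0 j)).trans_le (saturation_le_one _)
    linarith [mul_le_mul_of_nonneg_right (hlower j) (hy0 j)]
  have hpair : ∀ i j, i < j → 1 / 4 *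
      saturation ((b i - b j + effectiveGap (b j - a j) (y j)) * (y i - y j)) ≤
        saturation ((t i - t j) * (y i - y j)) := by
    intro i j hij
    have hyij : 0 ≤ y i - y j := sub_nonneg.2 (hy hij.le)
    have hτ : 0 ≤ effectiveGap (b j - a j) (y j) := effectiveGap_nonneg (hgap j) (hy0 j)
    have hdiff : b i - b j + effectiveGap (b j - a j) (y j) ≤ 4 * (t i - t j) := by
      linarith [hlower i, hupper j, hsep i j hij, effectiveGap_le (hgap i) (hy0 i), hab i]
    have htij : 0 ≤ t i - t j := by linarith [hsep i j hij, hab i]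
    have hsat := (saturation_le_saturation (sub_add_effectiveGap_mul_nonneg hab hsep hy hy0 hij)
      ((mul_le_mul_of_nonneg_right hdiff hyij).trans_eq (mul_assoc _ _ _))).trans
      (saturation_mul_le (by norm_num) (mul_nonneg htij hyij))
    linarith
  have hnonneg : ∀ i j, i < j → 0 ≤ 1 / 4 *
      saturation ((b i - b j + effectiveGap (b j - a j) (y j)) * (y i - y j)) := fun i j hij =>
    mul_nonneg (by norm_num)
      (saturation_nonneg (sub_add_effectiveGap_mul_nonneg hab hsep hy hy0 hij))
  rw [mul_mul_mul_comm, ← pairProd_mul_distrib]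
  exact mul_le_mul hexp (pairProd_le_pairProd hnonneg hpair) (pairProd_nonneg hnonneg)
    (Real.exp_pos _).le

theorem le_setIntegral_Icc_altModel (hab : a ≤ b) (hsep : ∀ i j, i < j → b j ≤ a i)
    (hy : Antitone y) (hy0 : 0 ≤ y) :
    (∏ _j : Fin n, Real.exp (-(1 / 2)) * (1 / 4)) * (pairProd fun _ _ : Fin n => (1 / 4 : ℝ)) *
      interlacingModel a b y ≤ ∫ t in Set.Icc a b, (∏ j, y j) * altModel t y := by
  set τ : Fin n → ℝ := fun j => effectiveGap (b j - a j) (y j)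
  set box := Set.Icc (b - (1 / 2 : ℝ) • τ) (b - (1 / 4 : ℝ) • τ)
  set m := (∏ _j : Fin n, Real.exp (-(1 / 2))) * (pairProd fun _ _ : Fin n => (1 / 4 : ℝ)) *
    (Real.exp (∑ k, b k * y k) *
      pairProd fun i j => saturation ((b i - b j + τ j) * (y i - y j)))
  have hτ : 0 ≤ τ := fun j => effectiveGap_nonneg (sub_nonneg.2 (hab j)) (hy0 j)
  have hτ_le : τ ≤ b - a := fun j => effectiveGap_le (sub_nonneg.2 (hab j)) (hy0 j)
  have hbox : box ⊆ Set.Icc a b := Icc_sub_smul_subset_Icc hτ hτ_le (by norm_num) (by norm_num)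
  have hvol : volume.real box = ∏ j, 1 / 4 * τ j :=
    (volume_real_Icc_sub_smul hτ (by norm_num)).trans (by norm_num)
  have hprod : 0 ≤ ∏ j, y j := Finset.prod_nonneg fun j _ => hy0 j
  have hint : IntegrableOn (fun t => (∏ j, y j) * altModel t y) (Set.Icc a b) :=
    ((continuous_altModel_left y).const_mul _).integrableOn_Icc
  have hm : ∀ t ∈ box, m ≤ altModel t y := fun t ht =>
    le_altModel_of_mem_Icc hab hsep hy hy0 ht
  calc _ = (∏ j, y j) * m * ∏ j, 1 / 4 * τ j := by
        simp only [m, interlacingModel, ← effectiveGap_mul (sub_nonneg.2 (hab _)) (hy0 _),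
          Finset.prod_mul_distrib, τ]
        ring
    _ ≤ ∫ t in box, (∏ j, y j) * altModel t y := by
        rw [← hvol]
        exact setIntegral_ge_of_const_le_real measurableSet_Icc isCompact_Icc.measure_ne_top
          (fun t ht => mul_le_mul_of_nonneg_left (hm t ht) hprod) (hint.mono_set hbox)
    _ ≤ _ := setIntegral_mono_set hint
        ((ae_restrict_iff' measurableSet_Icc).2 (.of_forall fun t ht =>
          mul_nonneg hprod (altModel_nonneg (antitone_of_mem_Icc hsep ht) hy)))
        hbox.eventuallyLE

end Interlacing

/-- The parameter set of the estimate, over which all comparisons `=Θ` are uniform. -/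
def antitonePairs (n : ℕ) : Set ((Fin n → ℝ) × (Fin n → ℝ)) :=
  {z | Antitone z.1 ∧ Antitone z.2}

theorem mk_subLast_mem_antitonePairs {n : ℕ} {z : (Fin (n + 1) → ℝ) × (Fin (n + 1) → ℝ)}
    {t : Fin n → ℝ} (hz : z ∈ antitonePairs (n + 1))
    (ht : t ∈ Set.Icc (Fin.tail z.1) (Fin.init z.1)) : (t, subLast z.2) ∈ antitonePairs n :=
  ⟨antitone_of_mem_Icc (fun _ _ => init_le_tail hz.1) ht, subLast_antitone hz.2⟩

theorem setIntegral_Icc_altModel_isTheta (n : ℕ) :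
    (fun z : (Fin (n + 1) → ℝ) × (Fin (n + 1) → ℝ) =>
      ∫ t in Set.Icc (Fin.tail z.1) (Fin.init z.1),
        (∏ j, subLast z.2 j) * altModel t (subLast z.2)) =Θ[𝓟 (antitonePairs (n + 1))]
      fun z => interlacingModel (Fin.tail z.1) (Fin.init z.1) (subLast z.2) := by
  have hlower : 0 < (∏ _j : Fin n, Real.exp (-(1 / 2)) * (1 / 4)) *
      pairProd fun _ _ : Fin n => (1 / 4 : ℝ) := by
    unfold pairProd
    positivity
  have hupper : 0 < ∏ j : Fin n, 4 * (2 ^ (j : ℕ) * (j : ℕ).factorial * Real.exp (1 / 2)) := by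
    positivity
  refine (isTheta_principal_iff_of_nonneg (fun z hz => ?_) fun z hz => ?_).2
    ⟨_, _, hlower, hupper, fun z hz => ⟨?_, ?_⟩⟩
  · exact setIntegral_nonneg measurableSet_Icc fun t ht =>
      mul_nonneg (Finset.prod_nonneg fun j _ => subLast_nonneg hz.2 j)
        (altModel_nonneg (mk_subLast_mem_antitonePairs hz ht).1 (subLast_antitone hz.2))
  · exact interlacingModel_nonneg (tail_le_init hz.1) (fun _ _ => init_le_tail hz.1)
      (subLast_antitone hz.2) (subLast_nonneg hz.2)
  · exact le_setIntegral_Icc_altModel (tail_le_init hz.1) (fun _ _ => init_le_tail hz.1)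
      (subLast_antitone hz.2) (subLast_nonneg hz.2)
  · exact setIntegral_Icc_altModel_le (tail_le_init hz.1) (fun _ _ => init_le_tail hz.1)
      (subLast_antitone hz.2) (subLast_nonneg hz.2)

theorem saturation_sub_mul_saturation_effectiveGap_isTheta {n : ℕ} {i j : Fin n} (hij : i < j) :
    (fun z : (Fin (n + 1) → ℝ) × (Fin (n + 1) → ℝ) =>
      saturation ((z.1 i.castSucc - z.1 j.castSucc) * subLast z.2 i) *
        saturation ((z.1 i.castSucc - z.1 j.castSucc +
          effectiveGap (z.1 j.castSucc - z.1 j.succ) (subLast z.2 j)) *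
            (subLast z.2 i - subLast z.2 j))) =Θ[𝓟 (antitonePairs (n + 1))]
      fun z => saturation ((z.1 i.castSucc - z.1 j.succ) * subLast z.2 i) *
        saturation ((z.1 i.castSucc - z.1 j.castSucc) * (z.2 i.castSucc - z.2 j.castSucc)) := by
  have hle : i.castSucc ≤ j.castSucc := Fin.castSucc_le_castSucc_iff.2 hij.le
  have hmaps : Tendsto (fun z : (Fin (n + 1) → ℝ) × (Fin (n + 1) → ℝ) =>
      (z.1 i.castSucc - z.1 j.castSucc, z.1 j.castSucc - z.1 j.succ,
        z.2 i.castSucc - z.2 j.castSucc, subLast z.2 j))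
      (𝓟 (antitonePairs (n + 1))) (𝓟 (Set.Ici 0)) :=
    tendsto_principal_principal.2 fun z hz => ⟨sub_nonneg.2 (hz.1 hle),
      sub_nonneg.2 (hz.1 (Fin.castSucc_le_succ j)), sub_nonneg.2 (hz.2 hle),
      subLast_nonneg hz.2 j⟩
  simpa only [subLast, sub_add_sub_cancel, sub_sub_sub_cancel_right] using
    isTheta_comp_tendsto saturation_mul_saturation_effectiveGap_isTheta hmaps

theorem exp_mul_interlacingModel_isTheta_altModel (n : ℕ) :
    (fun z : (Fin (n + 1) → ℝ) × (Fin (n + 1) → ℝ) =>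
      Real.exp (∑ i, z.1 i * z.2 (Fin.last n)) *
        interlacingModel (Fin.tail z.1) (Fin.init z.1) (subLast z.2)) =Θ[𝓟 (antitonePairs (n + 1))]
      fun z => altModel z.1 z.2 := by
  have htelescope := isTheta_prod_mul_pairProd_of_step
    (U := fun i k (z : (Fin (n + 1) → ℝ) × (Fin (n + 1) → ℝ)) =>
      saturation ((z.1 i.castSucc - z.1 k) * subLast z.2 i))
    fun _ _ => saturation_sub_mul_saturation_effectiveGap_isTheta (n := n)
  refine ((EventuallyEq.of_eq (funext fun z => ?_)).trans_isTheta
    ((isTheta_refl (fun z => Real.exp (∑ i, z.1 i * z.2 i)) _).mul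
      htelescope)).trans_eventuallyEq (.of_eq (funext fun z => ?_))
  · rw [sum_mul_eq_sum_mul_last_add z.1 z.2, Real.exp_add, mul_assoc]
    rfl
  · rw [altModel, pairProd_castSucc, mul_comm (pairProd _)]
    rfl

theorem setIntegral_altSum_isTheta_of_altSum_isTheta {n : ℕ}
    (h : (fun z : (Fin n → ℝ) × (Fin n → ℝ) => altSum z.1 z.2) =Θ[𝓟 (antitonePairs n)]
      fun z => altModel z.1 z.2) :
    (fun z : (Fin (n + 1) → ℝ) × (Fin (n + 1) → ℝ) =>
      ∫ t in Set.Icc (Fin.tail z.1) (Fin.init z.1),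
        (∏ j, subLast z.2 j) * altSum t (subLast z.2)) =Θ[𝓟 (antitonePairs (n + 1))]
      fun z => ∫ t in Set.Icc (Fin.tail z.1) (Fin.init z.1),
        (∏ j, subLast z.2 j) * altModel t (subLast z.2) := by
  have hmaps : Tendsto (fun p : ((Fin (n + 1) → ℝ) × (Fin (n + 1) → ℝ)) × (Fin n → ℝ) =>
      (p.2, subLast p.1.2))
      (𝓟 {p | p.1 ∈ antitonePairs (n + 1) ∧ p.2 ∈ Set.Icc (Fin.tail p.1.1) (Fin.init p.1.1)})
      (𝓟 (antitonePairs n)) :=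
    tendsto_principal_principal.2 fun p hp => mk_subLast_mem_antitonePairs hp.1 hp.2
  have hintegrand := (isTheta_refl
    (fun p : ((Fin (n + 1) → ℝ) × (Fin (n + 1) → ℝ)) × (Fin n → ℝ) => ∏ j, subLast p.1.2 j)
      _).mul (isTheta_comp_tendsto h hmaps)
  constructor
  · exact isBigO_setIntegral (fun _ _ => measurableSet_Icc)
      (fun z _ => ((continuous_altModel_left _).const_mul _).integrableOn_Icc)
      (fun z hz t ht => mul_nonneg (Finset.prod_nonneg fun j _ => subLast_nonneg hz.2 j)
        (altModel_nonneg (mk_subLast_mem_antitonePairs hz ht).1 (subLast_antitone hz.2)))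
      hintegrand.1
  · exact isBigO_setIntegral (fun _ _ => measurableSet_Icc)
      (fun z _ => ((continuous_altSum_left _).const_mul _).integrableOn_Icc)
      (fun z hz t ht => mul_nonneg (Finset.prod_nonneg fun j _ => subLast_nonneg hz.2 j)
        (altSum_nonneg (mk_subLast_mem_antitonePairs hz ht).1 (subLast_antitone hz.2)))
      hintegrand.2

theorem altSum_isTheta_altModel (n : ℕ) :
    (fun z : (Fin n → ℝ) × (Fin n → ℝ) => altSum z.1 z.2) =Θ[𝓟 (antitonePairs n)]
      fun z => altModel z.1 z.2 := by
  induction n with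
  | zero => simpa [altSum, altModel, pairProd] using isTheta_rfl
  | succ n ih =>
    calc _ =Θ[𝓟 (antitonePairs (n + 1))] fun z => Real.exp (∑ i, z.1 i * z.2 (Fin.last n)) *
          ∫ t in Set.Icc (Fin.tail z.1) (Fin.init z.1),
            (∏ j, subLast z.2 j) * altSum t (subLast z.2) :=
        EventuallyEq.isTheta (eventually_principal.2 fun z hz =>
          altSum_eq_exp_mul_setIntegral hz.1 z.2)
      _ =Θ[𝓟 (antitonePairs (n + 1))] fun z => Real.exp (∑ i, z.1 i * z.2 (Fin.last n)) *
            interlacingModel (Fin.tail z.1) (Fin.init z.1) (subLast z.2) :=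
        isTheta_rfl.mul ((setIntegral_altSum_isTheta_of_altSum_isTheta ih).trans
          (setIntegral_Icc_altModel_isTheta n))
      _ =Θ[𝓟 (antitonePairs (n + 1))] _ := exp_mul_interlacingModel_isTheta_altModel n

theorem exp_neg_rhoSum {n : ℕ} (x : Fin n → ℝ) :
    Real.exp (-rhoSum x) = pairProd fun i j => Real.exp (-(x i - x j)) := by
  simp only [rhoSum, pairProd, ← Real.exp_sum, Finset.sum_neg_distrib]

theorem altModel_mul_pairProd {n : ℕ} {ξ x : Fin n → ℝ} (hξ : Antitone ξ) (hx : Antitone x) :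
    (altModel ξ x * pairProd fun i j => 1 + (ξ i - ξ j) * (x i - x j)) =
      Real.exp (∑ k, ξ k * x k) * pairProd fun i j => (ξ i - ξ j) * (x i - x j) := by
  rw [altModel, mul_assoc, ← pairProd_mul_distrib]
  congr 1
  exact pairProd_congr fun i j hij => saturation_mul_one_add
    (mul_nonneg (sub_nonneg.2 (hξ hij.le)) (sub_nonneg.2 (hx hij.le)))

theorem altSum_mul_pairProd_isTheta (n : ℕ) :
    (fun z : (Fin n → ℝ) × (Fin n → ℝ) =>
      altSum z.1 z.2 * pairProd fun i j => 1 + (z.1 i - z.1 j) * (z.2 i - z.2 j))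
        =Θ[𝓟 (antitonePairs n)]
      fun z => vand z.1 * (pairProd fun i j => Real.sinh (z.2 i - z.2 j)) *
        Real.exp ((∑ k, z.1 k * z.2 k) - rhoSum z.2) *
        pairProd fun i j => 1 + z.2 i - z.2 j := by
  have hmaps : ∀ i j : Fin n, i < j → Tendsto (fun z : (Fin n → ℝ) × (Fin n → ℝ) =>
      z.2 i - z.2 j) (𝓟 (antitonePairs n)) (𝓟 (Set.Ici 0)) := fun i j hij =>
    tendsto_principal_principal.2 fun z hz => sub_nonneg.2 (hz.2 hij.le)
  calc _ =Θ[𝓟 (antitonePairs n)] fun z =>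
        altModel z.1 z.2 * pairProd fun i j => 1 + (z.1 i - z.1 j) * (z.2 i - z.2 j) :=
      (altSum_isTheta_altModel n).mul isTheta_rfl
    _ =Θ[𝓟 (antitonePairs n)] fun z => Real.exp (∑ k, z.1 k * z.2 k) *
        pairProd fun i j => (z.1 i - z.1 j) * (z.2 i - z.2 j) :=
      EventuallyEq.isTheta (eventually_principal.2 fun z hz => altModel_mul_pairProd hz.1 hz.2)
    _ =Θ[𝓟 (antitonePairs n)] fun z => Real.exp (∑ k, z.1 k * z.2 k) *
        pairProd fun i j => (z.1 i - z.1 j) * (Real.sinh (z.2 i - z.2 j) *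
          Real.exp (-(z.2 i - z.2 j)) * (1 + (z.2 i - z.2 j))) :=
      isTheta_rfl.mul (isTheta_pairProd fun i j hij =>
        isTheta_rfl.mul (isTheta_comp_tendsto isTheta_sinh_mul_exp_neg_mul (hmaps i j hij)))
    _ =Θ[𝓟 (antitonePairs n)] _ := EventuallyEq.isTheta (.of_eq (funext fun z => by
      simp only [pairProd_mul_distrib, sub_eq_add_neg (∑ k, z.1 k * z.2 k), Real.exp_add,
        exp_neg_rhoSum, add_sub_assoc]
      rw [show vand z.1 = pairProd fun i j => z.1 i - z.1 j from rfl]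
      ring))

/-- Sharp estimate for the Harish-Chandra spherical function of the curved complex
symmetric space of type `A_{n-1}`:
`A(λ,x) · ∏_{i<j}(1+(λ_i−λ_j)(x_i−x_j)) ≍ V(λ)·(∏_{i<j} sinh(x_i−x_j))·e^{⟨λ,x⟩−ρ(x)}·∏_{i<j}(1+x_i−x_j)`
for weakly decreasing `λ, x`, with constants depending only on `n`. -/
theorem curved_spherical_estimate_An (n : ℕ) (hn : 1 ≤ n) :
    ∃ C₁ C₂ : ℝ, 0 < C₁ ∧ 0 < C₂ ∧
      ∀ lam x : Fin n → ℝ, Antitone lam → Antitone x →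
        C₁ * (vand lam * (∏ i : Fin n, ∏ j ∈ Finset.Ioi i, Real.sinh (x i - x j)) *
              Real.exp ((∑ k, lam k * x k) - rhoSum x) *
              (∏ i : Fin n, ∏ j ∈ Finset.Ioi i, (1 + x i - x j))) ≤
            altSum lam x *
              (∏ i : Fin n, ∏ j ∈ Finset.Ioi i, (1 + (lam i - lam j) * (x i - x j))) ∧
        altSum lam x *
              (∏ i : Fin n, ∏ j ∈ Finset.Ioi i, (1 + (lam i - lam j) * (x i - x j))) ≤
          C₂ * (vand lam * (∏ i : Fin n, ∏ j ∈ Finset.Ioi i, Real.sinh (x i - x j)) *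
              Real.exp ((∑ k, lam k * x k) - rhoSum x) *
              (∏ i : Fin n, ∏ j ∈ Finset.Ioi i, (1 + x i - x j))) := by
  have hgap {v : Fin n → ℝ} (hv : Antitone v) {i j : Fin n} (hij : i < j) : 0 ≤ v i - v j :=
    sub_nonneg.2 (hv hij.le)
  obtain ⟨C₁, C₂, hC₁, hC₂, hbound⟩ := (isTheta_principal_iff_of_nonneg
    (fun z hz => mul_nonneg (altSum_nonneg hz.1 hz.2)
      (pairProd_nonneg fun i j hij => by
        have := mul_nonneg (hgap hz.1 hij) (hgap hz.2 hij)
        positivity))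
    (fun z hz => mul_nonneg (mul_nonneg (mul_nonneg
      (pairProd_nonneg fun i j hij => hgap hz.1 hij)
      (pairProd_nonneg fun i j hij => Real.sinh_nonneg_iff.2 (hgap hz.2 hij)))
      (Real.exp_pos _).le)
      (pairProd_nonneg fun i j hij => by linarith [hgap hz.2 hij]))).1
    (altSum_mul_pairProd_isTheta n)
  exact ⟨C₁, C₂, hC₁, hC₂, fun lam x hlam hx => hbound (lam, x) ⟨hlam, hx⟩⟩
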